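/- Let K and L be real symmetric positive definite d×d matrices, κ_1 ≥ … ≥ κ_d the eigenvalues of K and λ̄_1 ≤ … ≤ λ̄_d the eigenvalues of L in increasing order. Then det(K + L) ≤ ∏_{i=1}^d (κ_i + λ̄_i). -/

import Mathlib

/-!
Let `α` be the eigenvalues of `K + L`. If `T ≤ S`, then the decreasingly sorted eigenvalues of `T`
are at most those of `S`. Hence, for self-adjoint `T` and `S` with sorted eigenvalues `a` and
`b`, comparing both with `S + (T - S)⁺` gives `∑ (a i - b i)⁺ ≤ tr (T - S)⁺`. For `T = K`
and `S = c - L`, whose sorted eigenvalues are `c - λ̄ i`, this reads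
`∑ (κ i + λ̄ i - c)⁺ ≤ ∑ (α i - c)⁺`. As the traces agree, `κ + λ̄` is majorized by `α`. Up to an
affine function, `log` is a negative superposition of the functions `x ↦ (x - c)⁺`, so
`∏ α i ≤ ∏ (κ i + λ̄ i)`.
-/

open Module MeasureTheory intervalIntegral

theorem intervalIntegrable_posPart_sub_div_sq (x : ℝ) {u v : ℝ} (hu : 0 < u) (hv : 0 < v) :
    IntervalIntegrable (fun c => (x - c)⁺ / c ^ 2) volume u v := by
  refine ContinuousOn.intervalIntegrable fun c hc => ContinuousAt.continuousWithinAt ?_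
  have hc : 0 < c := (lt_min hu hv).trans_le hc.1
  have := Continuous.continuousAt (x := c) (show Continuous fun c : ℝ => (x - c)⁺ by fun_prop)
  exact this.div (by fun_prop) (by positivity)

theorem log_eq_sub_integral_posPart {m x M : ℝ} (hm : 0 < m) (hmx : m ≤ x) (hxM : x ≤ M) :
    Real.log x = Real.log m + (x - m) / m - ∫ c in m..M, (x - c)⁺ / c ^ 2 := by
  have hx : 0 < x := hm.trans_le hmx
  have hint := intervalIntegrable_posPart_sub_div_sq x hm hx
  have htail : ∫ c in x..M, (x - c)⁺ / c ^ 2 = 0 := by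
    refine integral_zero_ae (.of_forall fun c hc => ?_)
    rw [Set.uIoc_of_le hxM] at hc
    simp [posPart_eq_zero.2 (sub_nonpos.2 hc.1.le)]
  have hhead : ∫ c in m..x, (x - c)⁺ / c ^ 2 = (x - m) / m - (Real.log x - Real.log m) := by
    have hderiv : ∀ c ∈ Set.uIcc m x,
        HasDerivAt (fun c => -x * c⁻¹ - Real.log c) ((x - c)⁺ / c ^ 2) c := fun c hc => by
      rw [Set.uIcc_of_le hmx] at hc
      have hc0 : c ≠ 0 := (hm.trans_le hc.1).ne'
      rw [posPart_of_nonneg (sub_nonneg.2 hc.2)]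
      refine (((hasDerivAt_inv hc0).const_mul (-x)).sub (Real.hasDerivAt_log hc0)).congr_deriv ?_
      field_simp
    rw [integral_eq_sub_of_hasDerivAt hderiv hint]
    field_simp
    ring
  rw [← integral_add_adjacent_intervals hint
    (intervalIntegrable_posPart_sub_div_sq x hx (hx.trans_le hxM)), hhead, htail]
  ring

section Majorization

variable {ι : Type*} [Fintype ι] {α μ : ι → ℝ}

theorem sum_log_eq_sub_integral {x : ι → ℝ} {m M : ℝ} (hm : 0 < m)
    (hmM : m ≤ M) (hmx : ∀ i, m ≤ x i) (hxM : ∀ i, x i ≤ M) :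
    ∑ i, Real.log (x i) = Fintype.card ι * (Real.log m - 1) + (∑ i, x i) / m -
      ∫ c in m..M, (∑ i, (x i - c)⁺) / c ^ 2 := by
  simp only [Finset.sum_div]
  rw [integral_finsetSum fun i _ =>
      intervalIntegrable_posPart_sub_div_sq (x i) hm (hm.trans_le hmM),
    Finset.sum_congr rfl fun i _ => log_eq_sub_integral_posPart hm (hmx i) (hxM i)]
  simp only [Finset.sum_sub_distrib, Finset.sum_add_distrib, sub_div, div_self hm.ne']
  simp only [Finset.sum_const, Finset.card_univ, nsmul_eq_mul, mul_one]
  ring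

/-- `μ` is majorized by `α`. The criterion of Hardy, Littlewood and Pólya, with the functions
`x ↦ (x - c)⁺`, replaces partial sums of sorted entries, so that no sorting is needed. -/
def IsMajorizedBy (μ α : ι → ℝ) : Prop :=
  ∑ i, μ i = ∑ i, α i ∧ ∀ c, ∑ i, (μ i - c)⁺ ≤ ∑ i, (α i - c)⁺

namespace IsMajorizedBy

theorem le_of_forall_le (h : IsMajorizedBy μ α) {M : ℝ} (hM : ∀ i, α i ≤ M) (i : ι) :
    μ i ≤ M := by
  have hsum : ∑ i, (μ i - M)⁺ ≤ 0 := (h.2 M).trans_eq <|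
    Finset.sum_eq_zero fun i _ => posPart_eq_zero.2 (sub_nonpos.2 (hM i))
  have hi : (μ i - M)⁺ ≤ 0 :=
    (Finset.single_le_sum (fun j _ => posPart_nonneg _) (Finset.mem_univ i)).trans hsum
  exact sub_nonpos.1 ((le_posPart _).trans hi)

theorem neg (h : IsMajorizedBy μ α) : IsMajorizedBy (-μ) (-α) := by
  refine ⟨by simp [h.1], fun c => ?_⟩
  have hreflect (x : ℝ) : (-x - c)⁺ = (x - -c)⁺ - (x - -c) := by
    rw [sub_neg_eq_add, ← neg_add', posPart_neg, eq_sub_iff_add_eq', ← eq_sub_iff_add_eq,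
      posPart_sub_negPart]
  simpa only [Pi.neg_apply, hreflect, Finset.sum_sub_distrib, h.1, sub_le_sub_iff_right]
    using h.2 (-c)

theorem le_of_forall_ge (h : IsMajorizedBy μ α) {m : ℝ} (hm : ∀ i, m ≤ α i) (i : ι) :
    m ≤ μ i :=
  neg_le_neg_iff.1 (h.neg.le_of_forall_le (fun i => neg_le_neg (hm i)) i)

theorem sum_log_le (h : IsMajorizedBy μ α) (hα : ∀ i, 0 < α i) :
    ∑ i, Real.log (α i) ≤ ∑ i, Real.log (μ i) := by
  cases isEmpty_or_nonempty ι
  · simp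
  obtain ⟨i₀, hm⟩ := Finite.exists_min α
  obtain ⟨i₁, hM⟩ := Finite.exists_max α
  have hm₀ : 0 < α i₀ := hα i₀
  have hmM : α i₀ ≤ α i₁ := hm i₁
  have hint (x : ι → ℝ) :
      IntervalIntegrable (fun c => (∑ i, (x i - c)⁺) / c ^ 2) volume (α i₀) (α i₁) := by
    simp only [Finset.sum_div]
    simpa only [Finset.sum_fn] using IntervalIntegrable.sum Finset.univ fun i _ =>
      intervalIntegrable_posPart_sub_div_sq (x i) hm₀ (hα i₁)
  rw [sum_log_eq_sub_integral hm₀ hmM hm hM, sum_log_eq_sub_integral hm₀ hmM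
    (h.le_of_forall_ge hm) (h.le_of_forall_le hM), h.1]
  refine sub_le_sub_left (integral_mono_on hmM (hint μ) (hint α) fun c _ => ?_) _
  exact div_le_div_of_nonneg_right (h.2 c) (sq_nonneg c)

theorem pos (h : IsMajorizedBy μ α) (hα : ∀ i, 0 < α i) (i : ι) : 0 < μ i := by
  have : Nonempty ι := ⟨i⟩
  obtain ⟨i₀, hm⟩ := Finite.exists_min α
  exact (hα i₀).trans_le (h.le_of_forall_ge hm i)

theorem prod_le (h : IsMajorizedBy μ α) (hα : ∀ i, 0 ≤ α i) : ∏ i, α i ≤ ∏ i, μ i := by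
  by_cases hpos : ∀ i, 0 < α i
  · have hμ := h.pos hpos
    rw [← Real.log_le_log_iff (Finset.prod_pos fun i _ => hpos i)
      (Finset.prod_pos fun i _ => hμ i), Real.log_prod fun i _ => (hpos i).ne',
      Real.log_prod fun i _ => (hμ i).ne']
    exact h.sum_log_le hpos
  · obtain ⟨i, hi⟩ := not_forall.1 hpos
    rw [Finset.prod_eq_zero (Finset.mem_univ i) ((not_lt.1 hi).antisymm (hα i))]
    exact Finset.prod_nonneg fun i _ => h.le_of_forall_ge hα i

end IsMajorizedBy

end Majorization


theorem finrank_span_image_eq_ncard {R M ι : Type*} [Ring R] [Nontrivial R] [StrongRankCondition R]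
    [AddCommGroup M] [Module R M] [Finite ι] {v : ι → M} (hv : LinearIndependent R v)
    (s : Set ι) : finrank R (Submodule.span R (v '' s)) = s.ncard := by
  have := Fintype.ofFinite s
  rw [Set.image_eq_range, Set.ncard_eq_toFinset_card', Set.toFinset_card]
  exact finrank_span_eq_card (hv.comp _ Subtype.val_injective)

section EigenvalueFamily

variable {𝕜 E ι ι' : Type*} [RCLike 𝕜] [NormedAddCommGroup E] [InnerProductSpace 𝕜 E]
  [Fintype ι] [Fintype ι'] {T S : E →ₗ[𝕜] E} {a b : ι → ℝ}

/-- The real numbers `a i` are the eigenvalues of `T`, listed with multiplicity: some orthonormal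
basis `v` satisfies `T (v i) = a i • v i`. Existential in `v`, so that the list `a` may be put in
any order. -/
def HasEigenvalueFamily (T : E →ₗ[𝕜] E) (a : ι → ℝ) : Prop :=
  ∃ v : OrthonormalBasis ι 𝕜 E, ∀ i, T (v i) = (a i : 𝕜) • v i

theorem toMatrix_eq_diagonal_of_eigenbasis [DecidableEq ι] (v : OrthonormalBasis ι 𝕜 E)
    (hv : ∀ i, T (v i) = (a i : 𝕜) • v i) :
    T.toMatrix v.toBasis v.toBasis = Matrix.diagonal (fun i => (a i : 𝕜)) := by
  ext i j
  rw [LinearMap.toMatrix_apply, Matrix.diagonal_apply]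
  obtain rfl | hij := eq_or_ne i j <;> simp [*, RCLike.real_smul_eq_coe_mul]

theorem HasEigenvalueFamily.isSymmetric (hT : HasEigenvalueFamily T a) : T.IsSymmetric := by
  classical
  obtain ⟨v, hv⟩ := hT
  rw [← LinearMap.isHermitian_toMatrix_iff v, toMatrix_eq_diagonal_of_eigenbasis v hv]
  exact Matrix.isHermitian_diagonal_of_self_adjoint _ (by ext i; simp)

theorem re_inner_eq_sum_of_eigenbasis (v : OrthonormalBasis ι 𝕜 E)
    (hv : ∀ i, T (v i) = (a i : 𝕜) • v i) (x : E) :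
    RCLike.re (inner 𝕜 (T x) x) = ∑ i, a i * ‖inner 𝕜 (v i) x‖ ^ 2 := by
  have hT : T.IsSymmetric := HasEigenvalueFamily.isSymmetric ⟨v, hv⟩
  rw [← v.sum_inner_mul_inner (T x) x, map_sum]
  refine Finset.sum_congr rfl fun i _ => ?_
  rw [hT x (v i), hv, inner_smul_right, mul_assoc, RCLike.re_ofReal_mul, inner_mul_symm_re_eq_norm,
    norm_mul, norm_inner_symm x, sq]

theorem mul_norm_sq_le_re_inner_of_mem_span (v : OrthonormalBasis ι 𝕜 E)
    (hv : ∀ i, T (v i) = (a i : 𝕜) • v i) {s : Set ι} {c : ℝ} (hc : ∀ i ∈ s, c ≤ a i) {x : E}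
    (hx : x ∈ Submodule.span 𝕜 (v '' s)) : c * ‖x‖ ^ 2 ≤ RCLike.re (inner 𝕜 (T x) x) := by
  rw [re_inner_eq_sum_of_eigenbasis v hv, ← v.sum_sq_norm_inner_right x, Finset.mul_sum]
  refine Finset.sum_le_sum fun i _ => ?_
  by_cases hi : i ∈ s
  · gcongr
    exact hc i hi
  · have : inner 𝕜 (v i) x = 0 := by
      rw [← v.coe_toBasis, v.toBasis.mem_span_image] at hx
      simpa [v.repr_apply_apply] using Finsupp.notMem_support_iff.1 fun h => hi (hx h)
    simp [this]

namespace HasEigenvalueFamily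

theorem comp_equiv (hT : HasEigenvalueFamily T a) (e : ι' ≃ ι) :
    HasEigenvalueFamily T (a ∘ e) := by
  obtain ⟨v, hv⟩ := hT
  exact ⟨v.reindex e.symm, fun i => by simp [hv]⟩

theorem smul_one_sub (hT : HasEigenvalueFamily T a) (c : ℝ) :
    HasEigenvalueFamily ((c : 𝕜) • 1 - T) fun i => c - a i := by
  obtain ⟨v, hv⟩ := hT
  exact ⟨v, fun i => by simp [hv, sub_smul]⟩

theorem sub_smul_one (hT : HasEigenvalueFamily T a) (c : ℝ) :
    HasEigenvalueFamily (T - (c : 𝕜) • 1) fun i => a i - c := by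
  obtain ⟨v, hv⟩ := hT
  exact ⟨v, fun i => by simp [hv, sub_smul]⟩

theorem trace_eq (hT : HasEigenvalueFamily T a) :
    LinearMap.trace 𝕜 E T = ((∑ i, a i : ℝ) : 𝕜) := by
  classical
  obtain ⟨v, hv⟩ := hT
  rw [LinearMap.trace_eq_matrix_trace 𝕜 v.toBasis, toMatrix_eq_diagonal_of_eigenbasis v hv]
  simp

open scoped ComplexOrder in
theorem isPositive_iff (hT : HasEigenvalueFamily T a) : T.IsPositive ↔ ∀ i, 0 ≤ a i := by
  classical
  obtain ⟨v, hv⟩ := hT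
  rw [← LinearMap.posSemidef_toMatrix_iff v, toMatrix_eq_diagonal_of_eigenbasis v hv,
    Matrix.posSemidef_diagonal_iff]
  simp

theorem exists_posPart (hT : HasEigenvalueFamily T a) :
    ∃ N : E →ₗ[𝕜] E, HasEigenvalueFamily N a⁺ ∧ 0 ≤ N ∧ T ≤ N := by
  obtain ⟨v, hv⟩ := hT
  let N : E →ₗ[𝕜] E := v.toBasis.constr 𝕜 fun i => ((a⁺ i : ℝ) : 𝕜) • v i
  have hN (i : ι) : N (v i) = ((a⁺ i : ℝ) : 𝕜) • v i := by
    rw [← v.coe_toBasis]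
    exact v.toBasis.constr_basis 𝕜 _ i
  have hsub : HasEigenvalueFamily (N - T) (a⁺ - a) :=
    ⟨v, fun i => by simp [hN, hv, sub_smul]⟩
  have hN : HasEigenvalueFamily N a⁺ := ⟨v, hN⟩
  exact ⟨N, hN, N.nonneg_iff_isPositive.2 (hN.isPositive_iff.2 (posPart_nonneg a)),
    hsub.isPositive_iff.2 (sub_nonneg.2 (le_posPart a))⟩

variable [LinearOrder ι]

theorem exists_antitone_of_isSymmetric [FiniteDimensional 𝕜 E]
    (hT : T.IsSymmetric) (hι : Fintype.card ι = finrank 𝕜 E) :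
    ∃ a : ι → ℝ, Antitone a ∧ HasEigenvalueFamily T a := by
  let e : Fin (finrank 𝕜 E) ≃o ι := Fintype.orderIsoFinOfCardEq ι hι
  have h : HasEigenvalueFamily T (hT.eigenvalues rfl) :=
    ⟨hT.eigenvectorBasis rfl, hT.apply_eigenvectorBasis rfl⟩
  exact ⟨hT.eigenvalues rfl ∘ e.symm, (hT.eigenvalues_antitone rfl).comp_monotone e.symm.monotone,
    h.comp_equiv e.symm.toEquiv⟩

-- As in the Courant–Fischer principle, the eigenvectors of `T` for `a j`, `j ≤ i`, and of `S` for
-- `b j`, `j ≥ i`, span subspaces whose dimensions add up to `dim E + 1`, so these intersect.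
theorem le_of_le (hT : HasEigenvalueFamily T a) (hS : HasEigenvalueFamily S b)
    (ha : Antitone a) (hb : Antitone b) (hTS : T ≤ S) : a ≤ b := by
  obtain ⟨v, hv⟩ := hT
  obtain ⟨w, hw⟩ := hS
  have : FiniteDimensional 𝕜 E := v.toBasis.finiteDimensional_of_finite
  intro i
  let V := Submodule.span 𝕜 (v '' Set.Iic i)
  let W := Submodule.span 𝕜 (w '' Set.Ici i)
  have hVW : ¬ Disjoint V W := fun h => by
    have hle := Submodule.finrank_add_finrank_le_of_disjoint h
    have hcard := Set.ncard_union_add_ncard_inter (Set.Iic i) (Set.Ici i)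
    rw [Set.Iic_union_Ici, Set.Iic_inter_Ici, Set.Icc_self, Set.ncard_singleton, Set.ncard_univ,
      Nat.card_eq_fintype_card] at hcard
    rw [finrank_span_image_eq_ncard v.orthonormal.linearIndependent,
      finrank_span_image_eq_ncard w.orthonormal.linearIndependent,
      finrank_eq_card_basis v.toBasis] at hle
    lia
  obtain ⟨x, hxV, hxW, hx⟩ : ∃ x ∈ V, x ∈ W ∧ x ≠ 0 := by
    simpa [Submodule.disjoint_def] using hVW
  have hTx : a i * ‖x‖ ^ 2 ≤ RCLike.re (inner 𝕜 (T x) x) :=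
    mul_norm_sq_le_re_inner_of_mem_span v hv (fun j hj => ha hj) hxV
  have hSx : -b i * ‖x‖ ^ 2 ≤ RCLike.re (inner 𝕜 ((-S) x) x) :=
    mul_norm_sq_le_re_inner_of_mem_span (a := -b) w (fun i => by simp [hw])
      (fun j hj => neg_le_neg (hb hj)) hxW
  have hTSx : 0 ≤ RCLike.re (inner 𝕜 ((S - T) x) x) := hTS.re_inner_nonneg_left x
  simp only [LinearMap.neg_apply, LinearMap.sub_apply, inner_neg_left, inner_sub_left, map_neg,
    map_sub] at hSx hTSx
  exact le_of_mul_le_mul_right (by linarith) (pow_pos (norm_pos_iff.2 hx) 2)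

theorem sum_posPart_sub_le {r : ι → ℝ} (hT : HasEigenvalueFamily T a)
    (hS : HasEigenvalueFamily S b) (hTS : HasEigenvalueFamily (T - S) r) (ha : Antitone a)
    (hb : Antitone b) : ∑ i, (a i - b i)⁺ ≤ ∑ i, (r i)⁺ := by
  obtain ⟨N, hN, hN_nonneg, hN_ge⟩ := hTS.exists_posPart
  obtain ⟨z, hz_anti, hz⟩ : ∃ z : ι → ℝ, Antitone z ∧ HasEigenvalueFamily (S + N) z := by
    have ⟨v, _⟩ := hT
    have : FiniteDimensional 𝕜 E := v.toBasis.finiteDimensional_of_finite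
    exact exists_antitone_of_isSymmetric (hS.isSymmetric.add hN.isSymmetric)
      (finrank_eq_card_basis v.toBasis).symm
  have haz : a ≤ z := hT.le_of_le hz ha hz_anti (sub_le_iff_le_add'.1 hN_ge)
  have hbz : b ≤ z := hS.le_of_le hz hb hz_anti (le_add_of_nonneg_right hN_nonneg)
  have htrace : ∑ i, z i = ∑ i, b i + ∑ i, (r i)⁺ := by
    have := hz.trace_eq
    rw [map_add, hS.trace_eq, hN.trace_eq] at this
    exact_mod_cast this.symm
  calc ∑ i, (a i - b i)⁺ ≤ ∑ i, (z i - b i) :=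
        Finset.sum_le_sum fun i _ => sup_le (by simpa using haz i) (by simpa using hbz i)
    _ = ∑ i, (r i)⁺ := by rw [Finset.sum_sub_distrib, htrace, add_sub_cancel_left]

theorem isMajorizedBy_add {r : ι → ℝ} (hT : HasEigenvalueFamily T a)
    (hS : HasEigenvalueFamily S b) (hTS : HasEigenvalueFamily (T + S) r) (ha : Antitone a)
    (hb : Monotone b) : IsMajorizedBy (a + b) r := by
  refine ⟨?_, fun c => ?_⟩
  · have htrace := hTS.trace_eq
    rw [map_add, hT.trace_eq, hS.trace_eq] at htrace
    simp only [Pi.add_apply, Finset.sum_add_distrib]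
    exact_mod_cast htrace
  · have hdiff : HasEigenvalueFamily (T - ((c : 𝕜) • 1 - S)) fun i => r i - c := by
      simpa only [sub_sub_eq_add_sub] using hTS.sub_smul_one c
    have hcb : Antitone fun i => c - b i := fun i j hij => sub_le_sub_left (hb hij) c
    simpa only [Pi.add_apply, sub_sub_eq_add_sub] using
      hT.sum_posPart_sub_le (hS.smul_one_sub c) hdiff ha hcb

end HasEigenvalueFamily

end EigenvalueFamily

section Matrix

open scoped ComplexOrder

variable {𝕜 ι : Type*} [RCLike 𝕜] [Fintype ι]

theorem hasEigenvalueFamily_toEuclideanLin [DecidableEq ι] {A : Matrix ι ι 𝕜}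
    (hA : A.IsHermitian) : HasEigenvalueFamily A.toEuclideanLin hA.eigenvalues :=
  ⟨hA.eigenvectorBasis, fun i => WithLp.ofLp_injective 2 <| by
    simpa only [Matrix.ofLp_toLpLin, Matrix.toLin'_apply, WithLp.ofLp_smul,
      RCLike.real_smul_eq_coe_smul (K := 𝕜)] using hA.mulVec_eigenvectorBasis i⟩

theorem stmt_8_general [LinearOrder ι] {K L : Matrix ι ι 𝕜} (hK : K.IsHermitian)
    (hL : L.IsHermitian) (hKL : (K + L).PosSemidef) {κ lam : ι → ℝ}
    (hκ : ∃ e : Equiv.Perm ι, κ = hK.eigenvalues ∘ e) (hκdec : Antitone κ)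
    (hlam : ∃ e : Equiv.Perm ι, lam = hL.eigenvalues ∘ e) (hlaminc : Monotone lam) :
    (K + L).det ≤ ((∏ i, (κ i + lam i) : ℝ) : 𝕜) := by
  obtain ⟨e, rfl⟩ := hκ
  obtain ⟨f, rfl⟩ := hlam
  have hsum : HasEigenvalueFamily (K.toEuclideanLin + L.toEuclideanLin) hKL.1.eigenvalues := by
    simpa only [map_add] using hasEigenvalueFamily_toEuclideanLin hKL.1
  have hmaj := ((hasEigenvalueFamily_toEuclideanLin hK).comp_equiv e).isMajorizedBy_add
    ((hasEigenvalueFamily_toEuclideanLin hL).comp_equiv f) hsum hκdec hlaminc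
  rw [hKL.1.det_eq_prod_eigenvalues]
  exact_mod_cast hmaj.prod_le hKL.eigenvalues_nonneg

end Matrix

theorem stmt_8 (d : ℕ) (K L : Matrix (Fin d) (Fin d) ℝ)
    (hK : K.PosDef) (hL : L.PosDef)
    (κ lam : Fin d → ℝ)
    (hκ : ∃ e : Equiv.Perm (Fin d), κ = hK.1.eigenvalues ∘ e) (hκdec : Antitone κ)
    (hlam : ∃ e : Equiv.Perm (Fin d), lam = hL.1.eigenvalues ∘ e) (hlaminc : Monotone lam) :
    (K + L).det ≤ ∏ i, (κ i + lam i) := by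
  simpa using
    stmt_8_general hK.1 hL.1 (hK.posSemidef.add hL.posSemidef) hκ hκdec hlam hlaminc
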